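/- (Proposition 3.2, MIMCMC cost.) Let d ≥ 1, C₀ > 0, and w, β, γ ∈ (0,∞)^d satisfy β_i > γ_i for all i = 1,…,d and ∑_{i=1}^d γ_i / w_i ≤ 2. Then there exists a constant C < ∞, depending only on d, C₀, w, β, γ, such that for every ε ∈ (0,1) there exist L ∈ ℕ^d and integers N_α ≥ 1 for α ∈ I_L with the following property: for every b : ℕ^d → ℝ satisfying |b(α)| ≤ C₀ ∏_{i=1}^d 2^{−w_i α_i} for all α ∈ ℕ^d, and every family D : I_L → [0,∞) with D_α ≤ C₀ ∏_{i=1}^d 2^{−β_i α_i}, one has (∑_{α ∉ I_L} b(α))² + ∑_{α ∈ I_L} D_α / N_α ≤ C ε², while the total cost satisfies ∑_{α ∈ I_L} N_α ∏_{i=1}^d 2^{γ_i α_i} ≤ C ε^{−2}. -/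

import Mathlib

/-! The levels are chosen as `Lᵢ = ⌈log₂(ε⁻¹) / wᵢ⌉`, so that `2 ^ (-wᵢ Lᵢ) ≤ ε`, and
`N_α = ⌈ε⁻² ∏ᵢ 2 ^ (-tᵢ αᵢ)⌉` with rates `tᵢ` strictly between `γᵢ` and `βᵢ`.

* A multi-index outside the box `I_L` exceeds `L` in some direction `i`, and shifting it back by
  `Lᵢ` in that direction gains a factor `2 ^ (-wᵢ Lᵢ) ≤ ε`; hence the truncation bias is `O(ε)`.
* Since `t < β`, the sum of the `D_α / N_α` is `ε²` times a convergent series.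
* Since `γ < t`, the cost is `ε⁻²` times a convergent series, plus `∑_{α ∈ I_L} ∏ᵢ 2 ^ (γᵢ αᵢ)`
  due to rounding up. The latter is dominated by its top term
  `∏ᵢ 2 ^ (γᵢ Lᵢ) = O(ε ^ (-∑ᵢ γᵢ / wᵢ))`.
-/

open Finset Real

theorem summable_prod_apply_of_nonneg {ι : Type*} [Fintype ι] {κ : ι → Type*}
    {f : ∀ i, κ i → ℝ} (hf : ∀ i a, 0 ≤ f i a) (hsum : ∀ i, Summable (f i)) :
    Summable fun α : ∀ i, κ i => ∏ i, f i (α i) := by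
  classical
  refine summable_of_sum_le (c := ∏ i, ∑' a, f i a)
    (fun α => prod_nonneg fun i _ => hf i (α i)) fun S => ?_
  have hS : S ⊆ Fintype.piFinset fun i => S.image (· i) := fun α hα =>
    Fintype.mem_piFinset.2 fun i => mem_image_of_mem _ hα
  calc ∑ α ∈ S, ∏ i, f i (α i)
      ≤ ∑ α ∈ Fintype.piFinset fun i => S.image (· i), ∏ i, f i (α i) :=
        sum_le_sum_of_subset_of_nonneg hS fun α _ _ => prod_nonneg fun i _ => hf i (α i)
    _ = ∏ i, ∑ a ∈ S.image (· i), f i a := (prod_univ_sum _ _).symm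
    _ ≤ ∏ i, ∑' a, f i a :=
        prod_le_prod (fun i _ => sum_nonneg fun a _ => hf i a)
          fun i _ => (hsum i).sum_le_tsum _ fun a _ => hf i a

section DyadicWeight

variable {ι : Type*} [Fintype ι]

/-- The multi-index rate `∏ᵢ 2 ^ (sᵢ αᵢ)` with exponent vector `s`. The bias, variance and cost
rates of the MIMCMC estimator are the cases `s = -w`, `s = -β` and `s = γ`. -/
noncomputable def dyadicWeight (s : ι → ℝ) (α : ι → ℕ) : ℝ :=
  ∏ i, (2 : ℝ) ^ (s i * (α i : ℝ))

theorem dyadicWeight_pos (s : ι → ℝ) (α : ι → ℕ) : 0 < dyadicWeight s α :=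
  prod_pos fun _ _ => by positivity

theorem dyadicWeight_add_exponent (s t : ι → ℝ) (α : ι → ℕ) :
    dyadicWeight (s + t) α = dyadicWeight s α * dyadicWeight t α := by
  simp only [dyadicWeight, ← prod_mul_distrib, Pi.add_apply, add_mul, rpow_add two_pos]

theorem dyadicWeight_add_index (s : ι → ℝ) (α β : ι → ℕ) :
    dyadicWeight s (α + β) = dyadicWeight s α * dyadicWeight s β := by
  simp only [dyadicWeight, ← prod_mul_distrib, Pi.add_apply, Nat.cast_add, mul_add,
    rpow_add two_pos]

theorem dyadicWeight_neg (s : ι → ℝ) (α : ι → ℕ) :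
    dyadicWeight (-s) α = (dyadicWeight s α)⁻¹ := by
  simp only [dyadicWeight, ← prod_inv_distrib, Pi.neg_apply, neg_mul, rpow_neg two_pos.le]

theorem dyadicWeight_single [DecidableEq ι] (s : ι → ℝ) (i : ι) (n : ℕ) :
    dyadicWeight s (Pi.single i n) = (2 : ℝ) ^ (s i * (n : ℝ)) := by
  simp only [dyadicWeight]
  rw [Fintype.prod_eq_single i fun j hji => by simp [hji], Pi.single_eq_same]

theorem summable_dyadicWeight {s : ι → ℝ} (hs : ∀ i, s i < 0) : Summable (dyadicWeight s) := by
  refine summable_prod_apply_of_nonneg (f := fun i (a : ℕ) => (2 : ℝ) ^ (s i * (a : ℝ)))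
    (fun _ _ => by positivity) fun i => ?_
  simp only [rpow_mul two_pos.le, rpow_natCast]
  exact summable_geometric_of_lt_one (by positivity)
    (rpow_lt_one_of_one_lt_of_neg one_lt_two (hs i))

theorem sum_dyadicWeight_le_tsum {s : ι → ℝ} (hs : ∀ i, s i < 0) (S : Finset (ι → ℕ)) :
    ∑ α ∈ S, dyadicWeight s α ≤ ∑' α, dyadicWeight s α :=
  (summable_dyadicWeight hs).sum_le_tsum S fun α _ => (dyadicWeight_pos s α).le

theorem tsum_dyadicWeight_not_le_le {s : ι → ℝ} (hs : ∀ i, s i < 0) (L : ι → ℕ) :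
    ∑' α : {α : ι → ℕ // ¬ α ≤ L}, dyadicWeight s α ≤
      (∑ i, (2 : ℝ) ^ (s i * (L i : ℝ))) * ∑' α, dyadicWeight s α := by
  classical
  let shift : ι × (ι → ℕ) → ι → ℕ := fun p => p.2 + Pi.single p.1 (L p.1)
  have exists_shift_eq (α : {α : ι → ℕ // ¬ α ≤ L}) : ∃ p, shift p = α := by
    obtain ⟨i, hi⟩ : ∃ i, L i < α.1 i := by simpa [Pi.le_def] using α.2
    have hsingle : Pi.single i (L i) ≤ α.1 := by
      rw [Pi.single, update_le_iff]
      exact ⟨hi.le, fun _ _ => Nat.zero_le _⟩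
    exact ⟨(i, α.1 - Pi.single i (L i)), tsub_add_cancel_of_le hsingle⟩
  choose unshift shift_unshift using exists_shift_eq
  have unshift_injective : Function.Injective unshift := fun α α' h =>
    Subtype.ext (by rw [← shift_unshift, ← shift_unshift, h])
  have weight_shift (p : ι × (ι → ℕ)) :
      dyadicWeight s (shift p) = (2 : ℝ) ^ (s p.1 * (L p.1 : ℝ)) * dyadicWeight s p.2 := by
    rw [dyadicWeight_add_index, dyadicWeight_single, mul_comm]
  have hsum := summable_dyadicWeight hs
  have hsum_shift : Summable fun p : ι × (ι → ℕ) =>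
      (2 : ℝ) ^ (s p.1 * (L p.1 : ℝ)) * dyadicWeight s p.2 :=
    Summable.mul_of_nonneg (f := fun i => (2 : ℝ) ^ (s i * (L i : ℝ))) Summable.of_finite hsum
      (fun _ => by positivity) fun α => (dyadicWeight_pos s α).le
  calc ∑' α : {α : ι → ℕ // ¬ α ≤ L}, dyadicWeight s α
      ≤ ∑' p : ι × (ι → ℕ), (2 : ℝ) ^ (s p.1 * (L p.1 : ℝ)) * dyadicWeight s p.2 :=
        Summable.tsum_le_tsum_of_inj unshift unshift_injective
          (fun p _ => (weight_shift p).symm ▸ (dyadicWeight_pos s _).le)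
          (fun α => by rw [← weight_shift, shift_unshift]) (hsum.subtype _) hsum_shift
    _ = (∑ i, (2 : ℝ) ^ (s i * (L i : ℝ))) * ∑' α, dyadicWeight s α := by
        rw [hsum_shift.tsum_prod, tsum_fintype, sum_mul]
        simp only [tsum_mul_left]

theorem sum_Iic_dyadicWeight_le [DecidableEq ι] {s : ι → ℝ} (hs : ∀ i, 0 < s i) (L : ι → ℕ) :
    ∑ α ∈ Iic L, dyadicWeight s α ≤ dyadicWeight s L * ∑' α, dyadicWeight (-s) α := by
  have reflect (α : ι → ℕ) (hα : α ≤ L) :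
      dyadicWeight s (L - α) = dyadicWeight s L * dyadicWeight (-s) α := by
    rw [dyadicWeight_neg, eq_mul_inv_iff_mul_eq₀ (dyadicWeight_pos s α).ne',
      ← dyadicWeight_add_index, tsub_add_cancel_of_le hα]
  calc ∑ α ∈ Iic L, dyadicWeight s α
      = ∑ α ∈ Iic L, dyadicWeight s (L - α) :=
        sum_nbij' (L - ·) (L - ·) (fun α _ => mem_Iic.2 tsub_le_self)
          (fun α _ => mem_Iic.2 tsub_le_self) (fun α hα => tsub_tsub_cancel_of_le (mem_Iic.1 hα))
          (fun α hα => tsub_tsub_cancel_of_le (mem_Iic.1 hα))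
          fun α hα => by rw [tsub_tsub_cancel_of_le (mem_Iic.1 hα)]
    _ = dyadicWeight s L * ∑ α ∈ Iic L, dyadicWeight (-s) α := by
        rw [mul_sum]
        exact sum_congr rfl fun α hα => reflect α (mem_Iic.1 hα)
    _ ≤ dyadicWeight s L * ∑' α, dyadicWeight (-s) α :=
        mul_le_mul_of_nonneg_left
          (sum_dyadicWeight_le_tsum (fun i => neg_neg_of_pos (hs i)) _) (dyadicWeight_pos s L).le

end DyadicWeight

section TruncationLevel

variable {ι : Type*} {w : ι → ℝ} {ε : ℝ}

/-- The levels `Lᵢ = ⌈log₂(ε⁻¹) / wᵢ⌉` at which the bias rates `2 ^ (-wᵢ Lᵢ)` drop to `ε`. -/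
noncomputable def truncationLevel (w : ι → ℝ) (ε : ℝ) (i : ι) : ℕ :=
  ⌈logb 2 ε⁻¹ / w i⌉₊

theorem two_rpow_neg_mul_truncationLevel_le {i : ι} (hw : 0 < w i) (hε : 0 < ε) :
    (2 : ℝ) ^ (-w i * (truncationLevel w ε i : ℝ)) ≤ ε := by
  have hlevel : logb 2 ε⁻¹ ≤ truncationLevel w ε i * w i :=
    (div_le_iff₀ hw).1 (Nat.le_ceil _)
  calc (2 : ℝ) ^ (-w i * (truncationLevel w ε i : ℝ))
      ≤ (2 : ℝ) ^ logb 2 ε :=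
        rpow_le_rpow_of_exponent_le one_le_two (by rw [logb_inv] at hlevel; linarith)
    _ = ε := rpow_logb two_pos (by norm_num) hε

variable [Fintype ι]

theorem abs_tsum_not_le_truncationLevel_le {C₀ : ℝ} (hC₀ : 0 ≤ C₀) (hw : ∀ i, 0 < w i)
    (hε : 0 < ε) {b : (ι → ℕ) → ℝ} (hb : ∀ α, |b α| ≤ C₀ * dyadicWeight (-w) α) :
    |∑' α : {α : ι → ℕ // ¬ α ≤ truncationLevel w ε}, b α| ≤
      C₀ * (Fintype.card ι * ∑' α, dyadicWeight (-w) α) * ε := by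
  have hneg : ∀ i, (-w) i < 0 := fun i => neg_neg_of_pos (hw i)
  have hsum : Summable fun α : {α : ι → ℕ // ¬ α ≤ truncationLevel w ε} => dyadicWeight (-w) α :=
    (summable_dyadicWeight hneg).subtype _
  have hlevels : ∑ i, (2 : ℝ) ^ ((-w) i * (truncationLevel w ε i : ℝ)) ≤ Fintype.card ι * ε := by
    simpa using sum_le_card_nsmul univ _ ε
      fun i _ => two_rpow_neg_mul_truncationLevel_le (hw i) hε
  calc |∑' α : {α : ι → ℕ // ¬ α ≤ truncationLevel w ε}, b α|
      ≤ C₀ * ∑' α : {α : ι → ℕ // ¬ α ≤ truncationLevel w ε}, dyadicWeight (-w) α :=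
        norm_eq_abs (_ : ℝ) ▸ tsum_of_norm_bounded (hsum.hasSum.mul_left C₀) fun α => hb α
    _ ≤ C₀ * ((Fintype.card ι * ε) * ∑' α, dyadicWeight (-w) α) := by
        gcongr
        refine (tsum_dyadicWeight_not_le_le hneg _).trans ?_
        exact mul_le_mul_of_nonneg_right hlevels (tsum_nonneg fun α => (dyadicWeight_pos _ α).le)
    _ = C₀ * (Fintype.card ι * ∑' α, dyadicWeight (-w) α) * ε := by ring

theorem dyadicWeight_truncationLevel_le {γ : ι → ℝ} (hw : ∀ i, 0 < w i) (hγ : ∀ i, 0 ≤ γ i)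
    (hε : ε ∈ Set.Ioc (0 : ℝ) 1) :
    dyadicWeight γ (truncationLevel w ε) ≤
      (2 : ℝ) ^ (∑ i, γ i) * ε ^ (-∑ i, γ i / w i) := by
  have hlevel (i : ι) : (truncationLevel w ε i : ℝ) ≤ logb 2 ε⁻¹ / w i + 1 :=
    (Nat.ceil_lt_add_one
      (div_nonneg (logb_nonneg one_lt_two ((one_le_inv₀ hε.1).2 hε.2)) (hw i).le)).le
  calc dyadicWeight γ (truncationLevel w ε)
      = (2 : ℝ) ^ ∑ i, γ i * truncationLevel w ε i := (rpow_sum_of_pos two_pos _ _).symm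
    _ ≤ (2 : ℝ) ^ (∑ i, γ i + logb 2 ε * -∑ i, γ i / w i) := by
        refine rpow_le_rpow_of_exponent_le one_le_two ?_
        calc ∑ i, γ i * (truncationLevel w ε i : ℝ)
            ≤ ∑ i, γ i * (logb 2 ε⁻¹ / w i + 1) :=
              sum_le_sum fun i _ => mul_le_mul_of_nonneg_left (hlevel i) (hγ i)
          _ = ∑ i, γ i + logb 2 ε * -∑ i, γ i / w i := by
              rw [logb_inv, mul_neg, mul_sum, ← sum_neg_distrib, ← sum_add_distrib]
              exact sum_congr rfl fun i _ => by ring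
    _ = (2 : ℝ) ^ (∑ i, γ i) * ε ^ (-∑ i, γ i / w i) := by
        rw [rpow_add two_pos, rpow_mul two_pos.le, rpow_logb two_pos (by norm_num) hε.1]

end TruncationLevel

section StepCount

variable {ι : Type*} [Fintype ι] {t : ι → ℝ} {ε : ℝ}

/-- The number `N_α = ⌈ε⁻² ∏ᵢ 2 ^ (-tᵢ αᵢ)⌉` of MCMC steps run at the multi-index `α`. -/
noncomputable def stepCount (t : ι → ℝ) (ε : ℝ) (α : ι → ℕ) : ℕ :=
  ⌈dyadicWeight (-t) α / ε ^ 2⌉₊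

theorem stepCount_pos (t : ι → ℝ) (hε : 0 < ε) (α : ι → ℕ) : 0 < stepCount t ε α :=
  Nat.ceil_pos.2 (div_pos (dyadicWeight_pos _ α) (pow_pos hε 2))

theorem sum_div_stepCount_le {C₀ : ℝ} (hC₀ : 0 ≤ C₀) {β : ι → ℝ} (htβ : ∀ i, t i < β i)
    (hε : 0 < ε) {D : (ι → ℕ) → ℝ} {S : Finset (ι → ℕ)}
    (hD : ∀ α ∈ S, D α ≤ C₀ * dyadicWeight (-β) α) :
    ∑ α ∈ S, D α / stepCount t ε α ≤ C₀ * (∑' α, dyadicWeight (t - β) α) * ε ^ 2 := by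
  have hterm (α : ι → ℕ) (hα : α ∈ S) :
      D α / stepCount t ε α ≤ C₀ * ε ^ 2 * dyadicWeight (t - β) α := by
    have hweight := dyadicWeight_pos t α
    calc D α / stepCount t ε α
        ≤ C₀ * dyadicWeight (-β) α / stepCount t ε α := by
          gcongr
          exact hD α hα
      _ ≤ C₀ * dyadicWeight (-β) α / (dyadicWeight (-t) α / ε ^ 2) :=
          div_le_div_of_nonneg_left (mul_nonneg hC₀ (dyadicWeight_pos _ α).le)
            (div_pos (dyadicWeight_pos _ α) (pow_pos hε 2)) (Nat.le_ceil _)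
      _ = C₀ * ε ^ 2 * dyadicWeight (t - β) α := by
          rw [sub_eq_add_neg, dyadicWeight_add_exponent, dyadicWeight_neg t]
          field_simp
  calc ∑ α ∈ S, D α / stepCount t ε α
      ≤ C₀ * ε ^ 2 * ∑ α ∈ S, dyadicWeight (t - β) α := by
        rw [mul_sum]
        exact sum_le_sum hterm
    _ ≤ C₀ * ε ^ 2 * ∑' α, dyadicWeight (t - β) α := by
        gcongr
        exact sum_dyadicWeight_le_tsum (fun i => sub_neg.2 (htβ i)) S
    _ = C₀ * (∑' α, dyadicWeight (t - β) α) * ε ^ 2 := by ring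

theorem sum_stepCount_mul_dyadicWeight_le {γ : ι → ℝ} (hγt : ∀ i, γ i < t i) (ε : ℝ)
    (S : Finset (ι → ℕ)) :
    ∑ α ∈ S, stepCount t ε α * dyadicWeight γ α ≤
      (∑' α, dyadicWeight (γ - t) α) / ε ^ 2 + ∑ α ∈ S, dyadicWeight γ α := by
  have hterm (α : ι → ℕ) :
      stepCount t ε α * dyadicWeight γ α ≤
        dyadicWeight (γ - t) α / ε ^ 2 + dyadicWeight γ α := by
    calc stepCount t ε α * dyadicWeight γ α
        ≤ (dyadicWeight (-t) α / ε ^ 2 + 1) * dyadicWeight γ α :=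
          mul_le_mul_of_nonneg_right
            (Nat.ceil_lt_add_one (div_nonneg (dyadicWeight_pos _ α).le (sq_nonneg ε))).le
            (dyadicWeight_pos γ α).le
      _ = dyadicWeight (γ - t) α / ε ^ 2 + dyadicWeight γ α := by
          rw [sub_eq_add_neg, dyadicWeight_add_exponent]
          ring
  calc ∑ α ∈ S, stepCount t ε α * dyadicWeight γ α
      ≤ (∑ α ∈ S, dyadicWeight (γ - t) α) / ε ^ 2 + ∑ α ∈ S, dyadicWeight γ α := by
        rw [sum_div, ← sum_add_distrib]
        exact sum_le_sum fun α _ => hterm α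
    _ ≤ (∑' α, dyadicWeight (γ - t) α) / ε ^ 2 + ∑ α ∈ S, dyadicWeight γ α := by
        gcongr
        exact sum_dyadicWeight_le_tsum (fun i => sub_neg.2 (hγt i)) S

end StepCount

theorem sum_stepCount_mul_dyadicWeight_Iic_truncationLevel_le {ι : Type*} [Fintype ι]
    [DecidableEq ι] {w γ t : ι → ℝ} (hw : ∀ i, 0 < w i) (hγ : ∀ i, 0 < γ i)
    (hγt : ∀ i, γ i < t i) {ε : ℝ} (hε : ε ∈ Set.Ioc (0 : ℝ) 1) :
    ∑ α ∈ Iic (truncationLevel w ε), stepCount t ε α * dyadicWeight γ α ≤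
      (∑' α, dyadicWeight (γ - t) α + (2 : ℝ) ^ (∑ i, γ i) * ∑' α, dyadicWeight (-γ) α) *
        ε ^ (-max 2 (∑ i, γ i / w i)) := by
  set r := max 2 (∑ i, γ i / w i)
  have tsum_weight_nonneg (s : ι → ℝ) : 0 ≤ ∑' α, dyadicWeight s α :=
    tsum_nonneg fun α => (dyadicWeight_pos s α).le
  have hsq : (ε ^ 2)⁻¹ ≤ ε ^ (-r) := by
    rw [← rpow_two, ← rpow_neg hε.1.le]
    exact rpow_le_rpow_of_exponent_ge hε.1 hε.2 (neg_le_neg (le_max_left _ _))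
  have htop : dyadicWeight γ (truncationLevel w ε) ≤ (2 : ℝ) ^ (∑ i, γ i) * ε ^ (-r) := by
    refine (dyadicWeight_truncationLevel_le hw (fun i => (hγ i).le) hε).trans ?_
    gcongr ?_ * ?_
    exact rpow_le_rpow_of_exponent_ge hε.1 hε.2 (neg_le_neg (le_max_right _ _))
  calc ∑ α ∈ Iic (truncationLevel w ε), stepCount t ε α * dyadicWeight γ α
      ≤ (∑' α, dyadicWeight (γ - t) α) * (ε ^ 2)⁻¹ +
          dyadicWeight γ (truncationLevel w ε) * ∑' α, dyadicWeight (-γ) α :=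
        (sum_stepCount_mul_dyadicWeight_le hγt ε _).trans
          (add_le_add_right (sum_Iic_dyadicWeight_le hγ _) _)
    _ ≤ (∑' α, dyadicWeight (γ - t) α) * ε ^ (-r) +
          (2 : ℝ) ^ (∑ i, γ i) * ε ^ (-r) * ∑' α, dyadicWeight (-γ) α :=
        add_le_add (mul_le_mul_of_nonneg_left hsq (tsum_weight_nonneg _))
          (mul_le_mul_of_nonneg_right htop (tsum_weight_nonneg _))
    _ = _ := by ring

theorem mimcmc_cost_general {ι : Type*} [Fintype ι] [DecidableEq ι] (C₀ : ℝ) (hC₀ : 0 ≤ C₀)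
    (w β γ : ι → ℝ) (hw : ∀ i, 0 < w i) (hγ : ∀ i, 0 < γ i) (hβγ : ∀ i, γ i < β i) :
    ∃ C : ℝ, ∀ ε : ℝ, ε ∈ Set.Ioc (0 : ℝ) 1 →
      ∃ (L : ι → ℕ) (N : (ι → ℕ) → ℕ),
        (∀ α ∈ Iic L, 1 ≤ N α) ∧
        (∀ b : (ι → ℕ) → ℝ, (∀ α, |b α| ≤ C₀ * dyadicWeight (-w) α) →
          ∀ D : (ι → ℕ) → ℝ, (∀ α ∈ Iic L, D α ≤ C₀ * dyadicWeight (-β) α) →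
          (∑' α : {α : ι → ℕ // ¬ α ≤ L}, b α) ^ 2 + ∑ α ∈ Iic L, D α / N α ≤ C * ε ^ 2) ∧
        ∑ α ∈ Iic L, N α * dyadicWeight γ α ≤ C * ε ^ (-max 2 (∑ i, γ i / w i)) := by
  choose t hγt htβ using fun i => exists_between (hβγ i)
  let A := C₀ * (Fintype.card ι * ∑' α, dyadicWeight (-w) α)
  let B := C₀ * ∑' α, dyadicWeight (t - β) α
  let E := ∑' α, dyadicWeight (γ - t) α + (2 : ℝ) ^ (∑ i, γ i) * ∑' α, dyadicWeight (-γ) α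
  refine ⟨max (A ^ 2 + B) E, fun ε hε => ⟨truncationLevel w ε, stepCount t ε,
    fun α _ => stepCount_pos t hε.1 α, fun b hb D hD => ?_, ?_⟩⟩
  · have hbias : (∑' α : {α : ι → ℕ // ¬ α ≤ truncationLevel w ε}, b α) ^ 2 ≤ (A * ε) ^ 2 :=
      sq_le_sq.2 ((abs_tsum_not_le_truncationLevel_le hC₀ hw hε.1 hb).trans (le_abs_self _))
    calc _ ≤ (A * ε) ^ 2 + B * ε ^ 2 := add_le_add hbias (sum_div_stepCount_le hC₀ htβ hε.1 hD)
      _ = (A ^ 2 + B) * ε ^ 2 := by ring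
      _ ≤ max (A ^ 2 + B) E * ε ^ 2 := mul_le_mul_of_nonneg_right (le_max_left _ _) (sq_nonneg ε)
  · exact (sum_stepCount_mul_dyadicWeight_Iic_truncationLevel_le hw hγ hγt hε).trans
      (mul_le_mul_of_nonneg_right (le_max_right _ _) (rpow_nonneg hε.1.le _))

/-- Proposition 3.2, MIMCMC cost: under the rate assumptions with
`βᵢ > γᵢ` and `∑ γᵢ/wᵢ ≤ 2`, for every `ε ∈ (0,1)` one can choose levels `L` and numbers
of MCMC steps `N_α ≥ 1` such that for any multi-increments `b` with
`|b(α)| ≤ C₀ ∏ 2^{−wᵢαᵢ}` and any `D : I_L → [0,∞)` with `D_α ≤ C₀ ∏ 2^{−βᵢαᵢ}`, the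
total error `(∑_{α∉I_L} b(α))² + ∑_{α∈I_L} D_α/N_α` is `≤ C ε²`, at total cost
`∑_{α∈I_L} N_α ∏ 2^{γᵢαᵢ} ≤ C ε⁻²`. -/
theorem mimcmc_cost {d : ℕ} (hd : 1 ≤ d) (C₀ : ℝ) (hC₀ : 0 < C₀) (w β γ : Fin d → ℝ)
    (hw : ∀ i, 0 < w i) (hβ : ∀ i, 0 < β i) (hγ : ∀ i, 0 < γ i)
    (hβγ : ∀ i, γ i < β i) (hsum : ∑ i, γ i / w i ≤ 2) :
    ∃ C : ℝ, ∀ ε : ℝ, ε ∈ Set.Ioo (0 : ℝ) 1 →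
      ∃ (L : Fin d → ℕ) (N : (Fin d → ℕ) → ℕ),
        (∀ α ∈ Finset.Iic L, 1 ≤ N α) ∧
        (∀ b : (Fin d → ℕ) → ℝ,
          (∀ α : Fin d → ℕ, |b α| ≤ C₀ * ∏ i, (2 : ℝ) ^ (-(w i) * (α i : ℝ))) →
          ∀ D : (Fin d → ℕ) → ℝ,
          (∀ α ∈ Finset.Iic L,
            0 ≤ D α ∧ D α ≤ C₀ * ∏ i, (2 : ℝ) ^ (-(β i) * (α i : ℝ))) →
          (∑' α : {α : Fin d → ℕ // ¬ α ≤ L}, b (α : Fin d → ℕ)) ^ 2 +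
              ∑ α ∈ Finset.Iic L, D α / (N α : ℝ) ≤ C * ε ^ 2) ∧
        (∑ α ∈ Finset.Iic L, (N α : ℝ) * ∏ i, (2 : ℝ) ^ (γ i * (α i : ℝ)) ≤
          C * ε ^ (-2 : ℤ)) := by
  obtain ⟨C, hC⟩ := mimcmc_cost_general C₀ hC₀.le w β γ hw hγ hβγ
  refine ⟨C, fun ε hε => ?_⟩
  obtain ⟨L, N, hN, herror, hcost⟩ := hC ε (Set.Ioo_subset_Ioc_self hε)
  rw [max_eq_left hsum] at hcost
  exact ⟨L, N, hN, fun b hb D hD => herror b hb D fun α hα => (hD α hα).2, mod_cast hcost⟩
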